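/- arXiv:1502.02129 — 5 statements merged into one kernel-verified Lean document; each statement's English description precedes it below -/
import Mathlib

section
/- Let X be a metric space, let 𝒱 = {V_1, …, V_n} be a finite open covering of X, and let A ⊆ X be a subset without isolated points. Then there exists a finite open covering 𝒰 = {U_1, …, U_n} of X with U_i ⊆ V_i for every i such that: (a) the refinement U_i ⊆ V_i induces a simplicial isomorphism of nerves, i.e. for every set S ⊆ {1, …, n} of indices, ⋂_{i∈S} U_i ≠ ∅ if and only if ⋂_{i∈S} V_i ≠ ∅; and (b) 𝒰 is canonical on A, i.e. for every i with U_i ∩ A ≠ ∅ there exists a nonempty open set W ⊆ U_i with W ∩ A ≠ ∅ and W ∩ U_j = ∅ for all j ≠ i. -/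
/-!
Pick finitely many points witnessing the nonempty intersections of the `V i`; any shrinking that
keeps every `V i` unchanged at these points has the same nerve. Away from them, choose distinct
points `a i ∈ V i ∩ A` and pairwise disjoint closed neighbourhoods `C i ⊆ V i` of the `a i`, and
remove every `C j` from all the `V i` with `i ≠ j`. Nothing is uncovered, because `C j` stays
inside the `j`-th set, and `interior (C j)` has become a kernel of that set.
-/

open Set Function Topology

section Selection

variable {α ι : Type*} [Finite ι]

theorem exists_finite_forall_inter_nonempty (s : ι → Set α) :
    ∃ F : Set α, F.Finite ∧ ∀ i, (s i).Nonempty → (s i ∩ F).Nonempty :=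
  ⟨range fun i : {i // (s i).Nonempty} ↦ i.2.some, finite_range _,
    fun i hi ↦ ⟨hi.some, hi.some_mem, ⟨i, hi⟩, rfl⟩⟩

theorem exists_injective_forall_mem_of_infinite {s : ι → Set α} (hs : ∀ i, (s i).Infinite) :
    ∃ a : ι → α, Injective a ∧ ∀ i, a i ∈ s i := by
  classical
  have := Fintype.ofFinite ι
  choose t ht_sub ht_card using fun i ↦ (hs i).exists_subset_card_eq (Fintype.card ι)
  have hall_condition (J : Finset ι) : J.card ≤ (J.biUnion t).card := by
    rcases J.eq_empty_or_nonempty with rfl | ⟨i, hi⟩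
    · exact Nat.zero_le _
    · calc
        J.card ≤ Fintype.card ι := J.card_le_univ
        _ = (t i).card := (ht_card i).symm
        _ ≤ (J.biUnion t).card := Finset.card_le_card (Finset.subset_biUnion_of_mem t hi)
  obtain ⟨a, ha_inj, ha_mem⟩ :=
    (Finset.all_card_le_biUnion_card_iff_exists_injective t).1 hall_condition
  exact ⟨a, ha_inj, fun i ↦ ht_sub i (ha_mem i)⟩

end Selection

section Separation

variable {X ι : Type*} [TopologicalSpace X]

theorem infinite_inter_of_preperfect [T1Space X] {A V : Set X} (hA : Preperfect A)
    (hV : IsOpen V) (h : (V ∩ A).Nonempty) : (V ∩ A).Infinite :=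
  let ⟨x, hx⟩ := h
  .of_accPt (hA.open_inter hV x hx)

variable [T3Space X] [Finite ι]

theorem exists_pairwise_disjoint_isClosed_mem_nhds {a : ι → X} (ha : Injective a)
    {O : ι → Set X} (hO : ∀ i, O i ∈ 𝓝 (a i)) :
    ∃ C : ι → Set X, (∀ i, C i ∈ 𝓝 (a i)) ∧ (∀ i, IsClosed (C i)) ∧ (∀ i, C i ⊆ O i) ∧
      Pairwise (Disjoint on C) := by
  have nhds_disjoint : Pairwise (Disjoint on fun i ↦ 𝓝 (a i)) :=
    pairwise_disjoint_nhds.comp_of_injective ha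
  obtain ⟨C, hC, hC_disj⟩ := nhds_disjoint.exists_mem_filter_basis_of_disjoint
    fun i ↦ (closed_nhds_basis (a i)).restrict_subset (hO i)
  exact ⟨C, fun i ↦ (hC i).1.1, fun i ↦ (hC i).1.2, fun i ↦ (hC i).2, hC_disj⟩

theorem exists_pairwise_disjoint_isClosed_interior_inter_nonempty_of_infinite
    {O : ι → Set X} (hO : ∀ i, IsOpen (O i)) {A : Set X} (hA : ∀ i, (O i ∩ A).Infinite) :
    ∃ C : ι → Set X, (∀ i, IsClosed (C i)) ∧ (∀ i, C i ⊆ O i) ∧ Pairwise (Disjoint on C) ∧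
      ∀ i, (interior (C i) ∩ A).Nonempty := by
  obtain ⟨a, ha_inj, ha⟩ := exists_injective_forall_mem_of_infinite hA
  obtain ⟨C, hC_nhds, hC_closed, hC_sub, hC_disj⟩ :=
    exists_pairwise_disjoint_isClosed_mem_nhds ha_inj fun i ↦ (hO i).mem_nhds (ha i).1
  exact ⟨C, hC_closed, hC_sub, hC_disj,
    fun i ↦ ⟨a i, mem_interior_iff_mem_nhds.2 (hC_nhds i), (ha i).2⟩⟩

end Separation

/-- The family obtained from `V` by reserving each `C j` for the index `j`: the set `C j` is
removed from every `V i` with `i ≠ j`. Indices without a reserved region have `C j = ∅`. -/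
def carve {X ι : Type*} (V C : ι → Set X) (i : ι) : Set X :=
  V i \ ⋃ j ≠ i, C j

section Carve

variable {X ι : Type*} {V C : ι → Set X}

theorem carve_subset (i : ι) : carve V C i ⊆ V i :=
  sdiff_subset

theorem disjoint_carve {i j : ι} (hij : i ≠ j) : Disjoint (C i) (carve V C j) :=
  disjoint_sdiff_right.mono_left (subset_biUnion_of_mem (u := C) hij)

theorem subset_carve (hCV : ∀ i, C i ⊆ V i) (hC : Pairwise (Disjoint on C)) (i : ι) :
    C i ⊆ carve V C i :=
  subset_sdiff.2 ⟨hCV i, disjoint_iUnion₂_right.2 fun _ hji ↦ hC hji.symm⟩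

theorem mem_carve_of_forall_notMem {x : X} {i : ι} (hx : x ∈ V i) (hxC : ∀ j, x ∉ C j) :
    x ∈ carve V C i :=
  ⟨hx, by simp only [mem_iUnion, not_exists]; exact fun j _ ↦ hxC j⟩

theorem iUnion_carve (hCV : ∀ i, C i ⊆ V i) (hC : Pairwise (Disjoint on C)) :
    ⋃ i, carve V C i = ⋃ i, V i := by
  refine (iUnion_mono carve_subset).antisymm (iUnion_subset fun i x hx ↦ mem_iUnion.2 ?_)
  by_cases hxC : ∃ j, x ∈ C j
  · obtain ⟨j, hj⟩ := hxC
    exact ⟨j, subset_carve hCV hC j hj⟩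
  · exact ⟨i, mem_carve_of_forall_notMem hx (not_exists.1 hxC)⟩

theorem nonempty_iInter_carve_iff {F : Set X} (hCF : ∀ j, Disjoint (C j) F) {S : Set ι}
    (hF : (⋂ i ∈ S, V i).Nonempty → ((⋂ i ∈ S, V i) ∩ F).Nonempty) :
    (⋂ i ∈ S, carve V C i).Nonempty ↔ (⋂ i ∈ S, V i).Nonempty := by
  refine ⟨.mono (iInter₂_mono fun i _ ↦ carve_subset i), fun hS ↦ ?_⟩
  obtain ⟨p, hpV, hpF⟩ := hF hS
  have hpC (j : ι) : p ∉ C j := (hCF j).notMem_of_mem_right hpF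
  exact ⟨p, mem_iInter₂.2 fun i hi ↦ mem_carve_of_forall_notMem (mem_iInter₂.1 hpV i hi) hpC⟩

theorem isOpen_carve [TopologicalSpace X] [Finite ι] (hV : ∀ i, IsOpen (V i))
    (hC : ∀ i, IsClosed (C i)) (i : ι) : IsOpen (carve V C i) :=
  (hV i).sdiff ((toFinite _).isClosed_biUnion fun j _ ↦ hC j)

end Carve

section Canonization

variable {X ι : Type*} [TopologicalSpace X] [T3Space X] [Finite ι]

theorem exists_pairwise_disjoint_isClosed_interior_inter_nonempty
    {V : ι → Set X} (hV : ∀ i, IsOpen (V i)) {A : Set X}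
    (hA : ∀ i, (V i ∩ A).Nonempty → (V i ∩ A).Infinite) {F : Set X} (hF : F.Finite) :
    ∃ C : ι → Set X, (∀ i, IsClosed (C i)) ∧ (∀ i, C i ⊆ V i \ F) ∧ Pairwise (Disjoint on C) ∧
      ∀ i, (V i ∩ A).Nonempty → (interior (C i) ∩ A).Nonempty := by
  let I : Set ι := {i | (V i ∩ A).Nonempty}
  have infinite_diff (i : I) : ((V i \ F) ∩ A).Infinite := by
    rw [← inter_sdiff_right_comm]
    exact (hA i i.2).sdiff hF
  obtain ⟨C, hC_closed, hC_sub, hC_disj, hCA⟩ :=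
    exists_pairwise_disjoint_isClosed_interior_inter_nonempty_of_infinite
      (fun i : I ↦ (hV i).sdiff hF.isClosed) infinite_diff
  -- The union over proofs of `i ∈ I` extends `C` by `∅` outside `I`.
  refine ⟨fun i ↦ ⋃ h : i ∈ I, C ⟨i, h⟩, fun i ↦ isClosed_iUnion_of_finite fun h ↦ hC_closed _,
    fun i ↦ iUnion_subset fun h ↦ hC_sub _, fun i j hij ↦ ?_, fun i hi ↦ ?_⟩
  · simp only [onFun, disjoint_iUnion_left, disjoint_iUnion_right]
    exact fun _ _ ↦ hC_disj (Subtype.coe_ne_coe.1 hij)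
  · simp only [show i ∈ I from hi, iUnion_true]
    exact hCA ⟨i, hi⟩

theorem canonization_general (V : ι → Set X) (hVopen : ∀ i, IsOpen (V i)) (A : Set X)
    (hA : ∀ i, (V i ∩ A).Nonempty → (V i ∩ A).Infinite) :
    ∃ U : ι → Set X,
      (∀ i, IsOpen (U i)) ∧
      (⋃ i, U i = ⋃ i, V i) ∧
      (∀ i, U i ⊆ V i) ∧
      (∀ S : Set ι, (⋂ i ∈ S, U i).Nonempty ↔ (⋂ i ∈ S, V i).Nonempty) ∧
      (∀ i, (U i ∩ A).Nonempty →
        ∃ W : Set X, IsOpen W ∧ W.Nonempty ∧ W ⊆ U i ∧ (W ∩ A).Nonempty ∧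
          ∀ j, j ≠ i → W ∩ U j = ∅) := by
  obtain ⟨F, hF_fin, hF⟩ := exists_finite_forall_inter_nonempty fun S : Set ι ↦ ⋂ i ∈ S, V i
  obtain ⟨C, hC_closed, hC_sub, hC_disj, hCA⟩ :=
    exists_pairwise_disjoint_isClosed_interior_inter_nonempty hVopen hA hF_fin
  have hCV (i : ι) : C i ⊆ V i := (hC_sub i).trans sdiff_subset
  have hCF (i : ι) : Disjoint (C i) F := (subset_sdiff.1 (hC_sub i)).2
  refine ⟨carve V C, isOpen_carve hVopen hC_closed, iUnion_carve hCV hC_disj, carve_subset,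
    fun S ↦ nonempty_iInter_carve_iff hCF (hF S), fun i hi ↦ ?_⟩
  have hkernel : (interior (C i) ∩ A).Nonempty :=
    hCA i (hi.mono (inter_subset_inter_left A (carve_subset i)))
  exact ⟨interior (C i), isOpen_interior, hkernel.left,
    interior_subset.trans (subset_carve hCV hC_disj i), hkernel,
    fun j hji ↦ ((disjoint_carve hji.symm).mono_left interior_subset).inter_eq⟩

end Canonization

/-- **Canonization of a finite covering.**
For every finite open covering `𝒱 = {V_i}` of a metric space `X` and every subset
`A ⊆ X` without isolated points, there is a finite open covering `𝒰 = {U_i}` with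
`U_i ⊆ V_i` which has the same nonempty-intersection pattern (so the refinement induces
a simplicial isomorphism of nerves) and which is canonical on `A`: every `U_i` meeting
`A` has a kernel (a nonempty open subset of `U_i` disjoint from all other `U_j`)
meeting `A`. -/
theorem canonization {X : Type*} [MetricSpace X] {ι : Type*} [Fintype ι]
    (V : ι → Set X) (hVopen : ∀ i, IsOpen (V i)) (hVcov : ⋃ i, V i = Set.univ)
    (A : Set X) (hA : ∀ x ∈ A, x ∈ closure (A \ {x})) :
    ∃ U : ι → Set X,
      (∀ i, IsOpen (U i)) ∧
      (⋃ i, U i = Set.univ) ∧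
      (∀ i, U i ⊆ V i) ∧
      (∀ S : Set ι, (⋂ i ∈ S, U i).Nonempty ↔ (⋂ i ∈ S, V i).Nonempty) ∧
      (∀ i, (U i ∩ A).Nonempty →
        ∃ W : Set X, IsOpen W ∧ W.Nonempty ∧ W ⊆ U i ∧ (W ∩ A).Nonempty ∧
          ∀ j, j ≠ i → W ∩ U j = ∅) := by
  have hA_preperfect : Preperfect A := fun x hx ↦
    accPt_principal_iff_clusterPt.2 (mem_closure_iff_clusterPt.1 (hA x hx))
  simpa only [hVcov] using canonization_general V hVopen A
    fun i ↦ infinite_inter_of_preperfect hA_preperfect (hVopen i)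
end

section
/- Let X be a metric space, let A ⊆ X be a subset without isolated points, and let 𝒰 = {U_i}_{i∈ι} be a finite open covering of X that is canonical on A. Let σ = {i_0, i_1, …, i_m} ⊆ ι be a set of indices such that ⋂_{i∈σ} U_i = ∅ and U_i ∩ A ≠ ∅ for every i ∈ σ. Then there exists a finite open covering 𝒲 = {W_i}_{i∈ι} of X, canonical on A, with U_i ⊆ W_i for every i ∈ ι, such that for every set S ⊆ ι of indices: ⋂_{i∈S} W_i ≠ ∅ if and only if (⋂_{i∈S} U_i ≠ ∅ or S ⊆ σ). (That is, 𝒲 is an extension of 𝒰 with respect to {U_{i_0}, …, U_{i_m}}: the nerve of 𝒲 is obtained from the nerve of 𝒰 by adjoining the m-dimensional simplex corresponding to σ together with its faces.) -/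
/-!
Fix `i₀ ∈ σ`. A kernel of `U i₀` that meets `A` meets it in at least two points, since `A` has no
isolated points, so it contains two disjoint kernels `V` and `L` of `U i₀`, both meeting `A`. Adding
`V` to every `U i` with `i ∈ σ` creates the simplex `σ`. A point of `V` lies in no `U j` with
`j ≠ i₀`, so no other new simplex appears. The sets `U i` keep their kernels, except that `L` has
to be used for `i₀`.
-/

section General

variable {X ι : Type*}

/-- `enlargeOn U σ V` adds the set `V` to the members of the family `U` with index in `σ`. It is the
construction that turns `σ` into a simplex of the nerve. -/
def enlargeOn (U : ι → Set X) (σ : Set ι) (V : Set X) (i : ι) : Set X :=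
  U i ∪ ⋃ _ : i ∈ σ, V

section Enlarge

variable {U : ι → Set X} {σ : Set ι} {V : Set X} {i : ι} {x : X}

theorem mem_enlargeOn : x ∈ enlargeOn U σ V i ↔ x ∈ U i ∨ i ∈ σ ∧ x ∈ V := by
  simp only [enlargeOn, Set.mem_union, Set.mem_iUnion, exists_prop]

theorem subset_enlargeOn : U i ⊆ enlargeOn U σ V i :=
  Set.subset_union_left

theorem isOpen_enlargeOn [TopologicalSpace X] (hU : IsOpen (U i)) (hV : IsOpen V) :
    IsOpen (enlargeOn U σ V i) :=
  hU.union (isOpen_iUnion fun _ ↦ hV)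

end Enlarge

variable [TopologicalSpace X]

theorem exists_disjoint_isOpen_of_preperfect [T2Space X] {A K : Set X} (hA : Preperfect A)
    (hK : IsOpen K) (hKA : (K ∩ A).Nonempty) :
    ∃ V L : Set X, IsOpen V ∧ IsOpen L ∧ V ⊆ K ∧ L ⊆ K ∧
      (V ∩ A).Nonempty ∧ (L ∩ A).Nonempty ∧ Disjoint V L := by
  obtain ⟨x, hxK, hxA⟩ := hKA
  obtain ⟨y, ⟨hyK, hyA⟩, hyx⟩ := preperfect_iff_nhds.1 hA x hxA K (hK.mem_nhds hxK)
  obtain ⟨P, Q, hP, hQ, hxP, hyQ, hPQ⟩ := t2_separation hyx.symm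
  exact ⟨P ∩ K, Q ∩ K, hP.inter hK, hQ.inter hK, Set.inter_subset_right, Set.inter_subset_right,
    ⟨x, ⟨hxP, hxK⟩, hxA⟩, ⟨y, ⟨hyQ, hyK⟩, hyA⟩,
    hPQ.mono Set.inter_subset_left Set.inter_subset_left⟩

/-- `K` is a kernel of the member `U i` of the family `U`: a nonempty open subset of `U i` that no
member with a different index meets, so a repeated member has no kernel. -/
structure IsKernelAt (U : ι → Set X) (i : ι) (K : Set X) : Prop where
  isOpen : IsOpen K
  nonempty : K.Nonempty
  subset : K ⊆ U i
  disjoint : ∀ j ≠ i, Disjoint K (U j)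

/-- The family `U` is canonical on `A`: every member that meets `A` has a kernel that meets `A`.
The family is not required to cover the space. -/
def IsCanonicalOn (U : ι → Set X) (A : Set X) : Prop :=
  ∀ i, (U i ∩ A).Nonempty → ∃ K, IsKernelAt U i K ∧ (K ∩ A).Nonempty

theorem isCanonicalOn_iff {U : ι → Set X} {A : Set X} :
    IsCanonicalOn U A ↔ ∀ i, (U i ∩ A).Nonempty →
      ∃ K : Set X, IsOpen K ∧ K.Nonempty ∧ K ⊆ U i ∧ (K ∩ A).Nonempty ∧
        ∀ j, j ≠ i → K ∩ U j = ∅ := by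
  refine forall₂_congr fun i _ ↦ exists_congr fun K ↦ ?_
  simp only [← Set.disjoint_iff_inter_eq_empty]
  exact ⟨fun ⟨⟨hopen, hne, hsub, hdisj⟩, hKA⟩ ↦ ⟨hopen, hne, hsub, hKA, hdisj⟩,
    fun ⟨hopen, hne, hsub, hKA, hdisj⟩ ↦ ⟨⟨hopen, hne, hsub, hdisj⟩, hKA⟩⟩

namespace IsKernelAt

variable {U : ι → Set X} {σ : Set ι} {i j : ι} {A K L V : Set X}

theorem eq_of_mem (hK : IsKernelAt U i K) {x : X} (hxK : x ∈ K) (hxU : x ∈ U j) : j = i :=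
  not_imp_comm.1 (hK.disjoint j) (Set.not_disjoint_iff.2 ⟨x, hxK, hxU⟩)

theorem disjoint_of_ne (hK : IsKernelAt U i K) (hL : IsKernelAt U j L) (hij : i ≠ j) :
    Disjoint K L :=
  (hK.disjoint j hij.symm).mono_right hL.subset

theorem anti (hK : IsKernelAt U i K) (hL : IsOpen L) (hne : L.Nonempty) (hLK : L ⊆ K) :
    IsKernelAt U i L where
  isOpen := hL
  nonempty := hne
  subset := hLK.trans hK.subset
  disjoint j hj := (hK.disjoint j hj).mono_left hLK

theorem exists_disjoint [T2Space X] (hK : IsKernelAt U i K) (hA : Preperfect A)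
    (hKA : (K ∩ A).Nonempty) :
    ∃ V L, IsKernelAt U i V ∧ IsKernelAt U i L ∧
      (V ∩ A).Nonempty ∧ (L ∩ A).Nonempty ∧ Disjoint V L := by
  obtain ⟨V, L, hV, hL, hVK, hLK, hVA, hLA, hVL⟩ :=
    exists_disjoint_isOpen_of_preperfect hA hK.isOpen hKA
  exact ⟨V, L, hK.anti hV hVA.left hVK, hK.anti hL hLA.left hLK, hVA, hLA, hVL⟩

theorem enlargeOn_of_disjoint (hK : IsKernelAt U i K) (hKV : Disjoint K V) :
    IsKernelAt (enlargeOn U σ V) i K where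
  isOpen := hK.isOpen
  nonempty := hK.nonempty
  subset := hK.subset.trans subset_enlargeOn
  disjoint j hj := (hK.disjoint j hj).union_right (Set.disjoint_iUnion_right.2 fun _ ↦ hKV)

theorem nonempty_iInter_enlargeOn_iff (hV : IsKernelAt U i V) (hi : i ∈ σ) {S : Set ι} :
    (⋂ k ∈ S, enlargeOn U σ V k).Nonempty ↔ (⋂ k ∈ S, U k).Nonempty ∨ S ⊆ σ := by
  constructor
  · rintro ⟨x, hx⟩
    have hx' : ∀ k ∈ S, x ∈ U k ∨ k ∈ σ ∧ x ∈ V := fun k hk ↦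
      mem_enlargeOn.1 (Set.mem_iInter₂.1 hx k hk)
    by_cases hxV : x ∈ V
    · right
      intro k hk
      rcases hx' k hk with hxU | ⟨hkσ, -⟩
      · rwa [hV.eq_of_mem hxV hxU]
      · exact hkσ
    · left
      exact ⟨x, Set.mem_iInter₂.2 fun k hk ↦ (hx' k hk).resolve_right fun h ↦ hxV h.2⟩
  · rintro (hU | hSσ)
    · exact hU.mono (Set.iInter₂_mono fun _ _ ↦ subset_enlargeOn)
    · exact hV.nonempty.mono
        (Set.subset_iInter₂ fun k hk _ hxV ↦ mem_enlargeOn.2 (.inr ⟨hSσ hk, hxV⟩))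

end IsKernelAt

theorem IsCanonicalOn.enlargeOn {U : ι → Set X} {A : Set X} {σ : Set ι} {i₀ : ι} {V L : Set X}
    (hU : IsCanonicalOn U A) (hσA : ∀ i ∈ σ, (U i ∩ A).Nonempty) (hV : IsKernelAt U i₀ V)
    (hL : IsKernelAt U i₀ L) (hLA : (L ∩ A).Nonempty) (hLV : Disjoint L V) :
    IsCanonicalOn (enlargeOn U σ V) A := by
  rintro i ⟨x, hxW, hxA⟩
  have hUA : (U i ∩ A).Nonempty := by
    rcases mem_enlargeOn.1 hxW with hxU | ⟨hiσ, -⟩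
    · exact ⟨x, hxU, hxA⟩
    · exact hσA i hiσ
  rcases eq_or_ne i i₀ with rfl | hi
  · exact ⟨L, hL.enlargeOn_of_disjoint hLV, hLA⟩
  · obtain ⟨K, hK, hKA⟩ := hU i hUA
    exact ⟨K, hK.enlargeOn_of_disjoint (hK.disjoint_of_ne hV hi), hKA⟩

theorem extension_of_canonical_covering_general [T2Space X] {A : Set X} (hA : Preperfect A)
    {U : ι → Set X} (hUopen : ∀ i, IsOpen (U i)) (hUcanon : IsCanonicalOn U A)
    {σ : Set ι} (hσne : σ.Nonempty) (hσA : ∀ i ∈ σ, (U i ∩ A).Nonempty) :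
    ∃ W : ι → Set X, (∀ i, IsOpen (W i)) ∧ (∀ i, U i ⊆ W i) ∧ IsCanonicalOn W A ∧
      ∀ S : Set ι, (⋂ i ∈ S, W i).Nonempty ↔ (⋂ i ∈ S, U i).Nonempty ∨ S ⊆ σ := by
  obtain ⟨i₀, hi₀⟩ := hσne
  obtain ⟨K, hK, hKA⟩ := hUcanon i₀ (hσA i₀ hi₀)
  obtain ⟨V, L, hV, hL, -, hLA, hVL⟩ := hK.exists_disjoint hA hKA
  exact ⟨enlargeOn U σ V, fun i ↦ isOpen_enlargeOn (hUopen i) hV.isOpen,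
    fun _ ↦ subset_enlargeOn, hUcanon.enlargeOn hσA hV hL hLA hVL.symm,
    fun _ ↦ hV.nonempty_iInter_enlargeOn_iff hi₀⟩

end General

/-- **Extension of a canonical covering.**
If `𝒰 = {U_i}` is a finite open covering of a metric space `X`, canonical on a set `A`
without isolated points, and `σ` is a set of indices whose corresponding elements have
empty total intersection but each meets `A`, then there is a finite open covering
`𝒲 = {W_i}`, canonical on `A`, with `U_i ⊆ W_i`, whose nerve is obtained from the nerve
of `𝒰` by adjoining the simplex corresponding to `σ` together with its faces:
for every index set `S`, `⋂_{i∈S} W_i ≠ ∅ ↔ (⋂_{i∈S} U_i ≠ ∅ ∨ S ⊆ σ)`. -/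
theorem extension_of_canonical_covering {X : Type*} [MetricSpace X] {ι : Type*} [Fintype ι]
    (A : Set X) (hA : ∀ x ∈ A, x ∈ closure (A \ {x}))
    (U : ι → Set X) (hUopen : ∀ i, IsOpen (U i)) (hUcov : ⋃ i, U i = Set.univ)
    (hUcanon : ∀ i, (U i ∩ A).Nonempty →
      ∃ K : Set X, IsOpen K ∧ K.Nonempty ∧ K ⊆ U i ∧ (K ∩ A).Nonempty ∧
        ∀ j, j ≠ i → K ∩ U j = ∅)
    (σ : Finset ι) (hσne : σ.Nonempty)
    (hσ : ⋂ i ∈ σ, U i = ∅) (hσA : ∀ i ∈ σ, (U i ∩ A).Nonempty) :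
    ∃ W : ι → Set X,
      (∀ i, IsOpen (W i)) ∧
      (⋃ i, W i = Set.univ) ∧
      (∀ i, U i ⊆ W i) ∧
      (∀ i, (W i ∩ A).Nonempty →
        ∃ K : Set X, IsOpen K ∧ K.Nonempty ∧ K ⊆ W i ∧ (K ∩ A).Nonempty ∧
          ∀ j, j ≠ i → K ∩ W j = ∅) ∧
      (∀ S : Set ι, (⋂ i ∈ S, W i).Nonempty ↔
        ((⋂ i ∈ S, U i).Nonempty ∨ S ⊆ (σ : Set ι))) := by
  obtain ⟨W, hWopen, hUW, hWcanon, hWnerve⟩ := extension_of_canonical_covering_general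
    (fun x hx ↦ accPt_principal_iff_clusterPt.2 (mem_closure_iff_clusterPt.1 (hA x hx)))
    hUopen (isCanonicalOn_iff.2 hUcanon) hσne hσA
  exact ⟨W, hWopen, Set.univ_subset_iff.1 (hUcov ▸ Set.iUnion_mono hUW), hUW,
    isCanonicalOn_iff.1 hWcanon, hWnerve⟩
end

section
/- Let X be a metric space, let 𝒰 be an open covering of X, let U ∈ 𝒰, let x ∈ X and ε > 0 be such that the open ball B(x, ε) is contained in U and B(x, ε) ∩ V = ∅ for every element V ∈ 𝒰 with V ≠ U (i.e. B(x,ε) lies in a kernel of U), and let m ≥ 2 be a natural number. Define U(1) = U \ cl(B(x, ε/2)), U(k) = B(x, ε/(k−1)) \ cl(B(x, ε/(k+1))) for 1 < k < m, and U(m) = B(x, ε/(m−1)). Then: (a) each U(k) is open and U(1) ∪ U(2) ∪ ⋯ ∪ U(m) = U, so that the grating 𝒰′ = (𝒰 \ {U}) ∪ {U(1), …, U(m)} is again an open covering of X; (b) U(k) ∩ U(l) = ∅ whenever |k − l| ≥ 2; and (c) for every k ≥ 2 and every V ∈ 𝒰 with V ≠ U, U(k) ∩ V = ∅. -/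
/-- The `k`-th set of the grating of a covering element `U` with respect to the
4-tuple `{U, x, ε, m}`:
`U(1) = U \ cl(B(x, ε/2))`,
`U(k) = B(x, ε/(k−1)) \ cl(B(x, ε/(k+1)))` for `1 < k < m`, and
`U(m) = B(x, ε/(m−1))`. -/
def gratingSet {X : Type*} [MetricSpace X] (U : Set X) (x : X) (ε : ℝ) (m k : ℕ) :
    Set X :=
  if k = 1 then U \ closure (Metric.ball x (ε / 2))
  else if k = m then Metric.ball x (ε / (m - 1 : ℕ))
  else Metric.ball x (ε / (k - 1 : ℕ)) \ closure (Metric.ball x (ε / (k + 1 : ℕ)))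

/-!
Put `B 0 = U` and `B n = B(x, ε/n)` for `n ≥ 1`. This is a decreasing sequence of sets with
`cl (B (n + 2)) ⊆ B (n + 1)`, and in terms of it `U(k + 1) = B k \ cl (B (k + 2))` for `k + 1 < m`
and `U(m) = B (m - 1)`. For such a sequence `B n = (B n \ cl (B (n + 2))) ∪ B (n + 1)`, so peeling
off one shell at a time exhausts `B 0 = U`; and a shell `B k \ cl (B (k + 2))` misses every `B l`
with `l ≥ k + 2`.
-/

theorem sUnion_sdiff_singleton_union {α : Type*} {𝒰 𝒱 : Set (Set α)} {U : Set α} (hU : U ∈ 𝒰)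
    (h𝒱 : ⋃₀ 𝒱 = U) : ⋃₀ (𝒰 \ {U} ∪ 𝒱) = ⋃₀ 𝒰 :=
  calc ⋃₀ (𝒰 \ {U} ∪ 𝒱) = ⋃₀ (𝒰 \ {U}) ∪ ⋃₀ {U} := by
        rw [Set.sUnion_union, h𝒱, Set.sUnion_singleton]
    _ = ⋃₀ 𝒰 := by
        rw [← Set.sUnion_union, Set.sdiff_union_of_subset (Set.singleton_subset_iff.2 hU)]

section Shell

variable {X : Type*} [TopologicalSpace X] {B : ℕ → Set X}

/-- The `n`-th shell of a decreasing sequence of sets. Removing the closure of `B (n + 2)`, rather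
than of `B (n + 1)`, makes consecutive shells overlap, so that open shells can cover. -/
def closureShell (B : ℕ → Set X) (n : ℕ) : Set X :=
  B n \ closure (B (n + 2))

theorem closureShell_union_succ (hB : Antitone B) {n : ℕ}
    (hcl : closure (B (n + 2)) ⊆ B (n + 1)) : closureShell B n ∪ B (n + 1) = B n := by
  refine (Set.union_subset Set.sdiff_subset (hB n.le_succ)).antisymm fun y hy ↦ ?_
  by_cases hy' : y ∈ closure (B (n + 2))
  · exact Or.inr (hcl hy')
  · exact Or.inl ⟨hy, hy'⟩

theorem biUnion_closureShell_union (hB : Antitone B)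
    (hcl : ∀ n, closure (B (n + 2)) ⊆ B (n + 1)) (n : ℕ) :
    (⋃ k < n, closureShell B k) ∪ B n = B 0 := by
  induction n with
  | zero => simp
  | succ n ih =>
    rw [Set.biUnion_lt_succ, Set.union_assoc, closureShell_union_succ hB (hcl n), ih]

theorem disjoint_closureShell (hB : Antitone B) {k l : ℕ} (hkl : k + 2 ≤ l) :
    Disjoint (closureShell B k) (B l) :=
  Set.disjoint_sdiff_left.mono_right ((hB hkl).trans subset_closure)

end Shell

section Grating

variable {X : Type*} [MetricSpace X] {U : Set X} {x : X} {ε : ℝ} {m k l : ℕ}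

/-- The decreasing sequence `U, B(x, ε), B(x, ε/2), B(x, ε/3), …` whose shells are the grating sets.
The value at `0` is set apart, since `ε / 0 = 0` would give the empty ball. -/
def gratingBall (U : Set X) (x : X) (ε : ℝ) : ℕ → Set X
  | 0 => U
  | n + 1 => Metric.ball x (ε / (n + 1 : ℕ))

theorem gratingBall_succ_subset_ball (hε : 0 ≤ ε) (n : ℕ) :
    gratingBall U x ε (n + 1) ⊆ Metric.ball x ε :=
  Metric.ball_subset_ball (div_le_self hε (by simp))

theorem antitone_gratingBall (hε : 0 ≤ ε) (hball : Metric.ball x ε ⊆ U) :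
    Antitone (gratingBall U x ε) := by
  refine antitone_nat_of_succ_le fun n ↦ ?_
  cases n with
  | zero => exact (gratingBall_succ_subset_ball hε 0).trans hball
  | succ n => exact Metric.ball_subset_ball (by gcongr; exact Nat.le_succ _)

theorem closure_gratingBall_subset (hε : 0 < ε) (n : ℕ) :
    closure (gratingBall U x ε (n + 2)) ⊆ gratingBall U x ε (n + 1) :=
  Metric.closure_ball_subset_closedBall.trans <|
    Metric.closedBall_subset_ball (by gcongr; exact Nat.lt_succ_self _)

theorem gratingSet_succ_of_lt (hk : k + 1 < m) :
    gratingSet U x ε m (k + 1) = closureShell (gratingBall U x ε) k := by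
  cases k <;> simp [gratingSet, closureShell, gratingBall, hk.ne, add_assoc]

theorem gratingSet_succ_self (hm : m ≠ 0) :
    gratingSet U x ε (m + 1) (m + 1) = gratingBall U x ε m := by
  cases m <;> simp_all [gratingSet, gratingBall]

theorem gratingSet_succ_subset : gratingSet U x ε m (k + 1) ⊆ gratingBall U x ε k := by
  cases k with
  | zero => exact Set.sdiff_subset
  | succ k =>
    obtain rfl | hne := eq_or_ne (k + 2) m
    · exact (gratingSet_succ_self k.succ_ne_zero).subset
    · simp [gratingSet, gratingBall, hne]

theorem isOpen_gratingSet (hU : IsOpen U) : IsOpen (gratingSet U x ε m k) := by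
  unfold gratingSet
  split_ifs
  · exact hU.sdiff isClosed_closure
  · exact Metric.isOpen_ball
  · exact Metric.isOpen_ball.sdiff isClosed_closure

theorem biUnion_gratingSet (hε : 0 < ε) (hball : Metric.ball x ε ⊆ U) (hm : 2 ≤ m) :
    ⋃ k ∈ Set.Icc 1 m, gratingSet U x ε m k = U := by
  obtain ⟨n, rfl⟩ := Nat.exists_eq_add_of_le' (one_le_two.trans hm)
  have hIcc : Set.Icc 1 (n + 1) = (· + 1) '' Set.Iio (n + 1) := by
    ext k
    exact ⟨fun hk ↦ ⟨k - 1, by grind⟩, by grind⟩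
  calc ⋃ k ∈ Set.Icc 1 (n + 1), gratingSet U x ε (n + 1) k
      = ⋃ k < n + 1, gratingSet U x ε (n + 1) (k + 1) := by
        rw [hIcc, Set.biUnion_image]; rfl
    _ = (⋃ k < n, gratingSet U x ε (n + 1) (k + 1)) ∪ gratingSet U x ε (n + 1) (n + 1) :=
        Set.biUnion_lt_succ _ n
    _ = (⋃ k < n, closureShell (gratingBall U x ε) k) ∪ gratingBall U x ε n := by
        rw [gratingSet_succ_self (by lia)]
        congr! 4 with k hk
        exact gratingSet_succ_of_lt (by lia)
    _ = U := biUnion_closureShell_union (antitone_gratingBall hε.le hball)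
        (closure_gratingBall_subset hε) n

theorem disjoint_gratingSet (hε : 0 ≤ ε) (hball : Metric.ball x ε ⊆ U) (hk : 1 ≤ k)
    (hkl : k + 2 ≤ l) (hl : l ≤ m) :
    Disjoint (gratingSet U x ε m k) (gratingSet U x ε m l) := by
  obtain ⟨i, rfl⟩ := Nat.exists_eq_add_of_le' hk
  obtain ⟨j, rfl⟩ : ∃ j, l = j + 1 := Nat.exists_eq_add_of_le' (by lia)
  rw [gratingSet_succ_of_lt (by lia)]
  exact (disjoint_closureShell (antitone_gratingBall hε hball) (by lia)).mono_right
    gratingSet_succ_subset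

theorem gratingSet_subset_ball (hε : 0 ≤ ε) (hk : 2 ≤ k) :
    gratingSet U x ε m k ⊆ Metric.ball x ε := by
  obtain ⟨j, rfl⟩ := Nat.exists_eq_add_of_le' hk
  exact gratingSet_succ_subset.trans (gratingBall_succ_subset_ball hε j)

end Grating

/-- **The grating of a covering is a covering.**
Let `𝒰` be an open covering of a metric space `X`, let `U ∈ 𝒰`, and let `B(x, ε)` be a
ball contained in a kernel of `U` (i.e. `B(x, ε) ⊆ U` and `B(x, ε)` misses every other
element of `𝒰`), and let `m ≥ 2`. Then:
(a) each grating set `U(k)`, `1 ≤ k ≤ m`, is open and `U(1) ∪ ⋯ ∪ U(m) = U`, so the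
grating `𝒰′ = (𝒰 \ {U}) ∪ {U(1), …, U(m)}` is again an open covering of `X`;
(b) `U(k) ∩ U(l) = ∅` whenever `|k − l| ≥ 2`;
(c) for every `k ≥ 2` and every `V ∈ 𝒰` with `V ≠ U`, `U(k) ∩ V = ∅`. -/
theorem grating_is_covering {X : Type*} [MetricSpace X]
    (𝒰 : Set (Set X)) (hopen : ∀ V ∈ 𝒰, IsOpen V) (hcov : ⋃₀ 𝒰 = Set.univ)
    (U : Set X) (hU : U ∈ 𝒰) (x : X) (ε : ℝ) (hε : 0 < ε)
    (hball : Metric.ball x ε ⊆ U)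
    (hker : ∀ V ∈ 𝒰, V ≠ U → Metric.ball x ε ∩ V = ∅)
    (m : ℕ) (hm : 2 ≤ m) :
    (∀ k, 1 ≤ k → k ≤ m → IsOpen (gratingSet U x ε m k)) ∧
    (⋃ k ∈ Set.Icc 1 m, gratingSet U x ε m k) = U ∧
    (⋃₀ ((𝒰 \ {U}) ∪ (gratingSet U x ε m '' Set.Icc 1 m)) = Set.univ) ∧
    (∀ k l, 1 ≤ k → k ≤ m → 1 ≤ l → l ≤ m → 2 ≤ |(k : ℤ) - (l : ℤ)| →
      gratingSet U x ε m k ∩ gratingSet U x ε m l = ∅) ∧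
    (∀ k, 2 ≤ k → k ≤ m → ∀ V ∈ 𝒰, V ≠ U → gratingSet U x ε m k ∩ V = ∅) := by
  have hunion := biUnion_gratingSet hε hball hm
  refine ⟨fun k _ _ ↦ isOpen_gratingSet (hopen U hU), hunion, ?_, ?_, ?_⟩
  · rw [sUnion_sdiff_singleton_union hU (Set.sUnion_image _ _ |>.trans hunion), hcov]
  · intro k l hk hkm hl hlm hkl
    rw [← Set.disjoint_iff_inter_eq_empty]
    obtain hlk | hkl := le_abs.1 hkl
    · exact (disjoint_gratingSet hε.le hball hl (by lia) hkm).symm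
    · exact disjoint_gratingSet hε.le hball hk (by lia) hlm
  · intro k hk _ V hV hVU
    exact Set.subset_eq_empty
      (Set.inter_subset_inter_left V (gratingSet_subset_ball hε.le hk)) (hker V hV hVU)
end

section
/- Let n ≥ 1 and let X ⊆ ℝⁿ be a cellular set, i.e. X = ⋂_{i=1}^∞ D_i where each D_i ⊆ ℝⁿ is homeomorphic to the closed unit ball of ℝⁿ and D_{i+1} ⊆ int(D_i). Then for every ε > 0 there exist: a compact set D ⊆ ℝⁿ homeomorphic to the closed unit ball of ℝⁿ with X ⊆ int(D) and D ⊆ { y : dist(y, X) < ε }; a finite family (U_i)_{i∈ι} of open subsets of ℝⁿ covering D, each of diameter less than ε; and a finite family (W_i)_{i∈ι} of relatively open subsets of X covering X, each of diameter less than ε, such that for every set S ⊆ ι of indices, ⋂_{i∈S} W_i ≠ ∅ if and only if ⋂_{i∈S} U_i ≠ ∅ (i.e. the nerve of the covering (W_i) of X is simplicially isomorphic to the nerve of the covering (U_i) of the topological n-cell D). -/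
/-! Cover `X` by finitely many small compact sets `C i ⊆ X`. Small enough `δ`-thickenings `U i` of
the `C i` create no new nonempty intersections: the product `∏ C i` is compact, so if it misses the
closed diagonal then so do its small thickenings. Hence the nerves of `(C i)`, of `(U i)` and, lying
between them, of the traces `(X ∩ U i)` all coincide. By compactness some `D k` lies in the open
neighbourhood `⋃ U i` of `X`, so the `U i` cover this cell as well as `X`. -/

open Bornology Filter Metric Set Topology

section Thickening

variable {E ι : Type*} [MetricSpace E] [Finite ι] {C : ι → Set E}

theorem eventually_nonempty_iInter_of_nonempty_iInter_thickening (hC : ∀ i, IsCompact (C i)) :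
    ∀ᶠ δ in 𝓝[>] (0 : ℝ), (⋂ i, thickening δ (C i)).Nonempty → (⋂ i, C i).Nonempty := by
  have := Fintype.ofFinite ι
  obtain _ | ⟨⟨j⟩⟩ := isEmpty_or_nonempty ι
  · simp
  by_cases h : (⋂ i, C i).Nonempty
  · exact .of_forall fun _ _ ↦ h
  let diagonal : Set (ι → E) := range (Function.const ι)
  have hdiagonal : IsClosed diagonal :=
    Function.LeftInverse.isClosed_range (f := Function.eval j) (fun _ ↦ rfl)
      (continuous_apply j) (continuous_pi fun _ ↦ continuous_id)
  have hsub : univ.pi C ⊆ diagonalᶜ := by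
    rintro _ hx ⟨x, rfl⟩
    exact h ⟨x, mem_iInter.2 fun i ↦ hx i (mem_univ i)⟩
  obtain ⟨δ₀, hδ₀, hthick⟩ :=
    (isCompact_univ_pi hC).exists_thickening_subset_open hdiagonal.isOpen_compl hsub
  filter_upwards [Ioo_mem_nhdsGT hδ₀] with δ ⟨hδ, hδδ₀⟩
  rintro ⟨x, hx⟩
  choose z hzC hxz using fun i ↦ mem_thickening_iff.1 (mem_iInter.1 hx i)
  have hconst : Function.const ι x ∈ thickening δ (univ.pi C) :=
    mem_thickening_iff.2 ⟨z, fun i _ ↦ hzC i, (dist_pi_lt_iff hδ).2 hxz⟩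
  exact (hthick (thickening_mono hδδ₀.le _ hconst) (mem_range_self x)).elim

theorem eventually_nonempty_biInter_of_nonempty_biInter_thickening (hC : ∀ i, IsCompact (C i)) :
    ∀ᶠ δ in 𝓝[>] (0 : ℝ), ∀ S : Set ι,
      (⋂ i ∈ S, thickening δ (C i)).Nonempty → (⋂ i ∈ S, C i).Nonempty := by
  refine eventually_all.2 fun S ↦ ?_
  simpa only [biInter_eq_iInter] using
    eventually_nonempty_iInter_of_nonempty_iInter_thickening (C := fun i : S ↦ C i) (hC ·)

end Thickening

theorem exists_finite_isCompact_cover_diam_lt {E : Type*} [PseudoMetricSpace E] {X : Set E}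
    (hX : IsCompact X) {ε : ℝ} (hε : 0 < ε) :
    ∃ (N : ℕ) (C : Fin N → Set E),
      (∀ i, IsCompact (C i)) ∧ ⋃ i, C i = X ∧ ∀ i, diam (C i) < ε := by
  obtain ⟨t, -, ht, hcover⟩ := hX.finite_cover_balls (show 0 < ε / 3 by positivity)
  obtain ⟨N, f, -, rfl⟩ := ht.fin_param
  refine ⟨N, fun i ↦ X ∩ closedBall (f i) (ε / 3),
    fun i ↦ hX.inter_right isClosed_closedBall, ?_, fun i ↦ ?_⟩
  · rw [← inter_iUnion, inter_eq_left]
    rw [biUnion_range] at hcover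
    exact hcover.trans (iUnion_mono fun i ↦ ball_subset_closedBall)
  · calc diam (X ∩ closedBall (f i) (ε / 3))
        ≤ diam (closedBall (f i) (ε / 3)) := diam_mono inter_subset_right isBounded_closedBall
      _ ≤ 2 * (ε / 3) := diam_closedBall (by positivity)
      _ < ε := by linarith

theorem exists_finite_open_cover_diam_lt_nonempty_inter_biInter_iff {E : Type*} [MetricSpace E]
    {X : Set E} (hX : IsCompact X) (hne : X.Nonempty) {ε : ℝ} (hε : 0 < ε) :
    ∃ (N : ℕ) (U : Fin N → Set E),
      (∀ i, IsOpen (U i)) ∧ X ⊆ ⋃ i, U i ∧ (∀ i, IsBounded (U i) ∧ diam (U i) < ε) ∧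
      ∀ S : Set (Fin N), (X ∩ ⋂ i ∈ S, U i).Nonempty ↔ (⋂ i ∈ S, U i).Nonempty := by
  obtain ⟨N, C, hC, rfl, hdiam⟩ := exists_finite_isCompact_cover_diam_lt hX (half_pos hε)
  obtain ⟨δ, hnerve, hδ, hδε⟩ :=
    ((eventually_nonempty_biInter_of_nonempty_biInter_thickening hC).and
      (Ioo_mem_nhdsGT (show 0 < ε / 4 by positivity))).exists
  have hCU (i : Fin N) : C i ⊆ thickening δ (C i) := self_subset_thickening hδ _
  refine ⟨N, fun i ↦ thickening δ (C i), fun _ ↦ isOpen_thickening, iUnion_mono hCU,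
    fun i ↦ ⟨(hC i).isBounded.thickening, ?_⟩, fun S ↦ ⟨fun h ↦ h.mono inter_subset_right, ?_⟩⟩
  · calc diam (thickening δ (C i)) ≤ diam (C i) + 2 * δ := diam_thickening_le _ hδ.le
      _ < ε := by linarith [hdiam i]
  · intro hS
    obtain rfl | ⟨j, hj⟩ := S.eq_empty_or_nonempty
    · simpa using hne
    obtain ⟨y, hy⟩ := hnerve S hS
    exact ⟨y, mem_iUnion_of_mem j (mem_iInter₂.1 hy j hj), iInter₂_mono (fun i _ ↦ hCU i) hy⟩

theorem diam_preimage_val_le {E : Type*} [PseudoMetricSpace E] {X s : Set E} (hs : IsBounded s) :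
    diam ((↑) ⁻¹' s : Set X) ≤ diam s := by
  rw [← isometry_subtype_coe.diam_image]
  exact diam_mono (image_preimage_subset _ _) hs

theorem cellular_admits_fine_coverings_with_cell_nerve_general {E : Type*} [MetricSpace E]
    {X : Set E} {D : ℕ → Set E} (hDcompact : ∀ i, IsCompact (D i)) (hDne : ∀ i, (D i).Nonempty)
    (hDnest : ∀ i, D (i + 1) ⊆ interior (D i)) (hX : X = ⋂ i, D i) {ε : ℝ} (hε : 0 < ε) :
    ∃ k, X ⊆ interior (D k) ∧ D k ⊆ {y | infDist y X < ε} ∧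
      ∃ (N : ℕ) (U : Fin N → Set E) (W : Fin N → Set X),
        (∀ i, IsOpen (U i)) ∧ D k ⊆ ⋃ i, U i ∧ (∀ i, IsBounded (U i) ∧ diam (U i) < ε) ∧
        (∀ i, IsOpen (W i)) ∧ ⋃ i, W i = univ ∧ (∀ i, diam (W i) < ε) ∧
        ∀ S : Set (Fin N), (⋂ i ∈ S, W i).Nonempty ↔ (⋂ i ∈ S, U i).Nonempty := by
  have hDsucc (i : ℕ) : D (i + 1) ⊆ D i := (hDnest i).trans interior_subset
  have hDclosed (i : ℕ) : IsClosed (D i) := (hDcompact i).isClosed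
  have hXcompact : IsCompact X := by
    rw [hX]
    exact (hDcompact 0).of_isClosed_subset (isClosed_iInter hDclosed) (iInter_subset D 0)
  have hXne : X.Nonempty := by
    rw [hX]
    exact IsCompact.nonempty_iInter_of_sequence_nonempty_isCompact_isClosed D hDsucc hDne
      (hDcompact 0) hDclosed
  obtain ⟨N, U, hUopen, hXU, hUdiam, hnerve⟩ :=
    exists_finite_open_cover_diam_lt_nonempty_inter_biInter_iff hXcompact hXne hε
  have hnhds : ∀ x ∈ ⋂ i, D i, (⋃ i, U i) ∩ thickening ε X ∈ 𝓝 x := by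
    rw [← hX]
    exact fun x hx ↦ ((isOpen_iUnion hUopen).inter isOpen_thickening).mem_nhds
      ⟨hXU hx, self_subset_thickening hε X hx⟩
  obtain ⟨k, hk⟩ :=
    exists_subset_nhds_of_isCompact (antitone_nat_of_succ_le hDsucc).directed_ge hDcompact hnhds
  let W (i : Fin N) : Set X := Subtype.val ⁻¹' U i
  have hWcover : ⋃ i, W i = univ := by
    rwa [← preimage_iUnion, preimage_eq_univ_iff, Subtype.range_coe]
  have hWdiam (i : Fin N) : diam (W i) < ε :=
    (diam_preimage_val_le (hUdiam i).1).trans_lt (hUdiam i).2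
  have hWnerve (S : Set (Fin N)) : (⋂ i ∈ S, W i).Nonempty ↔ (⋂ i ∈ S, U i).Nonempty := by
    rw [← preimage_iInter₂, Subtype.preimage_coe_nonempty, hnerve]
  have hXk : X ⊆ interior (D k) := hX.subset.trans ((iInter_subset D (k + 1)).trans (hDnest k))
  have hkX : D k ⊆ {y | infDist y X < ε} := fun y hy ↦
    (mem_thickening_iff_infDist_lt hXne).1 (hk hy).2
  exact ⟨k, hXk, hkX, N, U, W, hUopen, hk.trans inter_subset_left, hUdiam,
    fun i ↦ (hUopen i).preimage continuous_subtype_val, hWcover, hWdiam, hWnerve⟩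

/-- **Theorem 1.1 (quantitative form).**
If `X ⊆ ℝⁿ` is cellular, i.e. `X = ⋂ D_i` with each `D_i` homeomorphic to the closed
unit ball of `ℝⁿ` and `D_{i+1} ⊆ int(D_i)`, then for every `ε > 0` there exist: a
compact set `Dc` homeomorphic to the closed unit ball with `X ⊆ int(Dc)` and
`Dc ⊆ {y : dist(y, X) < ε}`; a finite family `(U_i)` of open subsets of `ℝⁿ` covering
`Dc`, each of diameter `< ε`; and a finite family `(W_i)` of relatively open subsets
of `X` covering `X`, each of diameter `< ε`, with the same nonempty-intersection
pattern as `(U_i)` — i.e. the nerve of the covering `(W_i)` of `X` is simplicially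
isomorphic to the nerve of the covering `(U_i)` of the topological `n`-cell `Dc`. -/
theorem cellular_admits_fine_coverings_with_cell_nerve (n : ℕ) (hn : 1 ≤ n)
    (X : Set (EuclideanSpace ℝ (Fin n)))
    (D : ℕ → Set (EuclideanSpace ℝ (Fin n)))
    (hDcell : ∀ i, Nonempty
      ((D i) ≃ₜ (Metric.closedBall (0 : EuclideanSpace ℝ (Fin n)) 1)))
    (hDnest : ∀ i, D (i + 1) ⊆ interior (D i))
    (hX : X = ⋂ i, D i) :
    ∀ ε : ℝ, 0 < ε →
      ∃ Dc : Set (EuclideanSpace ℝ (Fin n)),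
        IsCompact Dc ∧
        Nonempty (Dc ≃ₜ (Metric.closedBall (0 : EuclideanSpace ℝ (Fin n)) 1)) ∧
        X ⊆ interior Dc ∧
        Dc ⊆ {y | Metric.infDist y X < ε} ∧
        ∃ (ι : Type) (_ : Fintype ι)
          (U : ι → Set (EuclideanSpace ℝ (Fin n))) (W : ι → Set X),
          (∀ i, IsOpen (U i)) ∧
          Dc ⊆ ⋃ i, U i ∧
          (∀ i, Metric.diam (U i) < ε) ∧
          (∀ i, IsOpen (W i)) ∧
          (⋃ i, W i = Set.univ) ∧
          (∀ i, Metric.diam (W i) < ε) ∧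
          (∀ S : Set ι, (⋂ i ∈ S, W i).Nonempty ↔ (⋂ i ∈ S, U i).Nonempty) := by
  intro ε hε
  have hDcompact (i : ℕ) : IsCompact (D i) :=
    let ⟨e⟩ := hDcell i
    isCompact_iff_compactSpace.2 e.symm.compactSpace
  have hDne (i : ℕ) : (D i).Nonempty :=
    let ⟨e⟩ := hDcell i
    ⟨_, (e.symm ⟨0, mem_closedBall_self zero_le_one⟩).2⟩
  obtain ⟨k, hXk, hkX, N, U, W, hUopen, hkU, hUdiam, hW⟩ :=
    cellular_admits_fine_coverings_with_cell_nerve_general hDcompact hDne hDnest hX hε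
  exact ⟨D k, hDcompact k, hDcell k, hXk, hkX, Fin N, inferInstance, U, W, hUopen, hkU,
    fun i ↦ (hUdiam i).2, hW⟩
end

section
/- The subset X₂ = { (x, sin(1/x)) : x ∈ (0, 1] } ∪ ( {0} × [−1, 0) ) of ℝ², equipped with the subspace topology, is a locally compact space. (X₂ is the 'compressed sinusoid' CS = { (x, sin(1/x)) : x ∈ (0,1] } ∪ ( {0} × [−1, 1] ) with the continuum {0} × [0, 1] removed.) -/
/-!
The compressed sinusoid is closed: a limit of points of the graph of `sin (1 / x)` lies on the
graph where that function is continuous, and otherwise on the segment `{0} × [-1, 1]`. Removing a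
closed segment leaves a locally closed subset of the plane, and locally closed subsets of a locally
compact space are locally compact.
-/

open Set Filter Topology

section Graph

variable {X Y : Type*} [TopologicalSpace X] [TopologicalSpace Y] [T2Space Y] {f : X → Y}
  {s a : Set X} {t : Set Y}

theorem eq_of_mem_closure_graphOn {x : X} {y : Y} (hf : ContinuousWithinAt f s x)
    (hxy : (x, y) ∈ closure (s.graphOn f)) : y = f x := by
  have : (𝓝[s.graphOn f] (x, y)).NeBot := mem_closure_iff_nhdsWithin_neBot.mp hxy
  have tendsto_fst : Tendsto Prod.fst (𝓝[s.graphOn f] (x, y)) (𝓝[s] x) :=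
    continuousWithinAt_fst.tendsto_nhdsWithin fun p hp => (mem_graphOn.mp hp).1
  have tendsto_snd : Tendsto Prod.snd (𝓝[s.graphOn f] (x, y)) (𝓝 y) := continuousWithinAt_snd
  have comp_fst_eq_snd : f ∘ Prod.fst =ᶠ[𝓝[s.graphOn f] (x, y)] Prod.snd :=
    eventually_mem_nhdsWithin.mono fun p hp => (mem_graphOn.mp hp).2
  exact tendsto_nhds_unique_of_eventuallyEq tendsto_snd (hf.tendsto.comp tendsto_fst)
    comp_fst_eq_snd.symm

theorem isClosed_graphOn_sdiff_union_prod (hs : IsClosed s) (ha : IsClosed a) (ht : IsClosed t)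
    (hf : ContinuousOn f (s \ a)) (hft : MapsTo f (s \ a) t) :
    IsClosed ((s \ a).graphOn f ∪ a ×ˢ t) := by
  refine isClosed_of_closure_subset ?_
  rw [closure_union, (ha.prod ht).closure_eq]
  refine union_subset ?_ subset_union_right
  rintro ⟨x, y⟩ hxy
  have graph_subset : (s \ a).graphOn f ⊆ s ×ˢ t :=
    image_subset_iff.mpr fun x hx => ⟨hx.1, hft hx⟩
  obtain ⟨hx, hy⟩ : x ∈ s ∧ y ∈ t := closure_minimal graph_subset (hs.prod ht) hxy
  by_cases hxa : x ∈ a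
  · exact Or.inr ⟨hxa, hy⟩
  · have hyx : y = f x := eq_of_mem_closure_graphOn (hf x ⟨hx, hxa⟩) hxy
    exact Or.inl (mem_graphOn.mpr ⟨⟨hx, hxa⟩, hyx.symm⟩)

end Graph

/-- The compressed sinusoid `CS`: the graph of `sin (1 / x)` over `(0, 1]` together with the
limit segment `{0} × [-1, 1]`. -/
def compressedSinusoid : Set (ℝ × ℝ) :=
  (Ioc 0 1).graphOn (fun x => Real.sin (1 / x)) ∪ {0} ×ˢ Icc (-1) 1

theorem continuousOn_sin_one_div : ContinuousOn (fun x : ℝ => Real.sin (1 / x)) {0}ᶜ :=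
  Real.continuous_sin.comp_continuousOn (continuousOn_const.div continuousOn_id fun _ hx => hx)

theorem isClosed_compressedSinusoid : IsClosed compressedSinusoid := by
  rw [compressedSinusoid, ← Icc_sdiff_left]
  exact isClosed_graphOn_sdiff_union_prod isClosed_Icc isClosed_singleton isClosed_Icc
    (continuousOn_sin_one_div.mono fun _ hx => hx.2) fun _ _ => Real.sin_mem_Icc _

theorem compressedSinusoid_sdiff_segment :
    compressedSinusoid \ ({0} ×ˢ Icc 0 1) =
      {p : ℝ × ℝ | (p.1 ∈ Ioc (0 : ℝ) 1 ∧ p.2 = Real.sin (1 / p.1)) ∨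
        (p.1 = 0 ∧ p.2 ∈ Ico (-1 : ℝ) 0)} := by
  have disjoint_graph : Disjoint ((Ioc 0 1).graphOn fun x : ℝ => Real.sin (1 / x))
      ({0} ×ˢ Icc 0 1) :=
    disjoint_left.mpr fun p hp hp' => (mem_graphOn.mp hp).1.1.ne' hp'.1
  have segment_sdiff : Icc (-1 : ℝ) 1 \ Icc 0 1 = Ico (-1) 0 := by
    ext y
    simp only [Set.mem_sdiff, mem_Icc, mem_Ico]
    grind
  rw [compressedSinusoid, union_sdiff_distrib, disjoint_graph.sdiff_eq_left, prod_sdiff_prod,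
    segment_sdiff, Set.sdiff_self, empty_prod, union_empty]
  ext p
  simp only [mem_union, mem_graphOn, mem_prod, mem_singleton_iff, mem_ofPred_eq,
    eq_comm (a := p.2)]

/-- **Example 5.2: the space `X₂` is locally compact.**
The subset `X₂ = {(x, sin(1/x)) : x ∈ (0,1]} ∪ ({0} × [−1, 0))` of `ℝ²` (the
"compressed sinusoid" with the continuum `{0} × [0,1]` removed), equipped with the
subspace topology, is a locally compact space. -/
theorem compressedSinusoid_minus_segment_locallyCompact :
    LocallyCompactSpace
      ({p : ℝ × ℝ |
        (p.1 ∈ Set.Ioc (0 : ℝ) 1 ∧ p.2 = Real.sin (1 / p.1)) ∨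
        (p.1 = 0 ∧ p.2 ∈ Set.Ico (-1 : ℝ) 0)} : Set (ℝ × ℝ)) := by
  rw [← compressedSinusoid_sdiff_segment]
  have isClosed_segment : IsClosed (({0} : Set ℝ) ×ˢ Icc (0 : ℝ) 1) :=
    isClosed_singleton.prod isClosed_Icc
  have isLocallyClosed_sdiff : IsLocallyClosed (compressedSinusoid \ ({0} ×ˢ Icc 0 1)) :=
    isClosed_compressedSinusoid.isLocallyClosed.inter isClosed_segment.isOpen_compl.isLocallyClosed
  exact isLocallyClosed_sdiff.locallyCompactSpace
end
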